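/- A graph is chordal bipartite if and only if every induced subgraph has a weakly simplicial vertex; moreover, every nontrivial chordal bipartite graph (one with at least one edge) has a weakly simplicial vertex in each partition class. -/

import Mathlib

/-- `G` has an induced cycle on `n` vertices. -/
def HasInducedCycleOn {α : Type} (G : SimpleGraph α) (n : ℕ) : Prop :=
  ∃ f : ZMod n → α, Function.Injective f ∧
    ∀ i j : ZMod n, G.Adj (f i) (f j) ↔ (j = i + 1 ∨ i = j + 1)

/-- A graph is chordal bipartite if it is bipartite and has no induced cycle on 6
or more vertices. -/
def ChordalBipartite {α : Type} (G : SimpleGraph α) : Prop :=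
  G.Colorable 2 ∧ ∀ n : ℕ, 6 ≤ n → ¬ HasInducedCycleOn G n

/-- A vertex is weakly simplicial if its neighbourhood is an independent set and
the neighbourhoods of its neighbours form a chain under inclusion. -/
def WeaklySimplicialVtx {α : Type} (G : SimpleGraph α) (v : α) : Prop :=
  (∀ u w, G.Adj v u → G.Adj v w → ¬ G.Adj u w) ∧
    ∀ u w, G.Adj v u → G.Adj v w →
      G.neighborSet u ⊆ G.neighborSet w ∨ G.neighborSet w ⊆ G.neighborSet u

/-- A bipartition of `G` into classes `V₁`, `V₂`. -/
def IsBipartitionOf {α : Type} (G : SimpleGraph α) (V₁ V₂ : Set α) : Prop :=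
  V₁ ∪ V₂ = Set.univ ∧ Disjoint V₁ V₂ ∧
    ∀ u v, G.Adj u v → (u ∈ V₁ ∧ v ∈ V₂) ∨ (u ∈ V₂ ∧ v ∈ V₁)

/-!
On a cycle with at least six vertices, the two neighbours of a vertex have incomparable
neighbourhoods, so no vertex is weakly simplicial. Conversely, the vertices at distance two from a
weakly simplicial vertex `v` pairwise share a neighbour in `N(v)`, so they have the same colour in
every 2-colouring of `G - v`, and repainting `N(v)` extends such a colouring to `G`.

To find a weakly simplicial vertex in the class `V₁`, regard the neighbourhoods of the vertices of
`V₂` as hyperedges on `V₁`: without induced cycles of length at least six this is a totally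
balanced hypergraph, and one wants a nest point, a vertex whose hyperedges form a chain. As in the
theorem of Brouwer, Duchet and Schrijver, one shows by induction on the number of hyperedges that
every hyperedge `N(b)` missing some vertex `a` is missed by a nest point. Let `C` be the component
of `a` after deleting `b` and `N(b)`. Among the hyperedges in `C` there is one, `N(e)`, whose trace
on `N(b)` contains all the other traces, as two incomparable ones would produce a long induced
cycle through `b`. If `N(e)` misses a vertex of some hyperedge in `C`, the induction applies to `e`
in place of `b`; otherwise `N(e)` contains all the hyperedges in `C`, so it cannot break a chain and
may be traded for `N(b)`.
-/

open SimpleGraph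

section Walks

variable {V : Type*} {G : SimpleGraph V}

theorem dist_getVert_getVert_of_length_eq_dist {u v : V} {p : G.Walk u v}
    (hp : p.length = G.dist u v) {i j : ℕ} (hij : i ≤ j) (hj : j ≤ p.length) :
    G.dist (p.getVert i) (p.getVert j) = j - i := by
  have hsub : ((p.drop i).take (j - i)).IsSubwalk p :=
    ((p.drop i).isSubwalk_take (j - i)).trans (p.isSubwalk_drop i)
  have hdist := length_eq_dist_of_subwalk hp hsub
  rw [Walk.take_length, Walk.drop_length, Walk.drop_getVert, Nat.add_sub_cancel' hij] at hdist
  omega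

theorem exists_pathGraph_embedding {u v : V} (h : G.Reachable u v) :
    ∃ q : pathGraph (G.dist u v + 1) ↪g G, q 0 = u ∧ q (Fin.last _) = v := by
  obtain ⟨p, hp⟩ := h.exists_walk_length_eq_dist
  have hadj (i j : ℕ) (hij : i ≤ j) (hj : j ≤ p.length) :
      G.Adj (p.getVert i) (p.getVert j) ↔ i + 1 = j := by
    rw [← dist_eq_one_iff_adj, dist_getVert_getVert_of_length_eq_dist hp hij hj]
    omega
  refine ⟨⟨⟨fun i => p.getVert i, fun i j hij => ?_⟩, fun {i j} => ?_⟩, p.getVert_zero,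
    (congrArg p.getVert hp.symm).trans p.getVert_length⟩
  · exact Fin.ext ((p.isPath_of_length_eq_dist hp).getVert_injOn
      (show i.val ≤ _ by omega) (show j.val ≤ _ by omega) hij)
  · change G.Adj (p.getVert i) (p.getVert j) ↔ _
    rw [pathGraph_adj]
    rcases le_total i.val j.val with hij | hij
    · rw [hadj i j hij (by omega)]
      omega
    · rw [G.adj_comm, hadj j i hij (by omega)]
      omega

theorem four_le_dist_of_isBipartiteWith {V₁ V₂ : Set V} (hb : G.IsBipartiteWith V₁ V₂) {s t : V}
    (hs : s ∈ V₁) (ht : t ∈ V₁) (hst : s ≠ t) (hcommon : ∀ x, G.Adj s x → ¬ G.Adj x t)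
    (hr : G.Reachable s t) : 4 ≤ G.dist s t := by
  obtain ⟨p, hp⟩ := hr.exists_walk_length_eq_dist
  rw [← hp]
  have ht₂ : t ∉ V₂ := Set.disjoint_left.1 hb.disjoint ht
  match p with
  | .nil => exact absurd rfl hst
  | .cons h₁ .nil => exact absurd (hb.mem_of_mem_adj hs h₁) ht₂
  | .cons h₁ (.cons h₂ .nil) => exact absurd h₂ (hcommon _ h₁)
  | .cons h₁ (.cons h₂ (.cons h₃ .nil)) =>
    have hw := hb.symm.mem_of_mem_adj (hb.mem_of_mem_adj hs h₁) h₂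
    exact absurd (hb.mem_of_mem_adj hw h₃) ht₂
  | .cons _ (.cons _ (.cons _ (.cons _ _))) =>
    simp only [Walk.length_cons]
    omega

end Walks

section Connectivity

variable {V : Type*} {G : SimpleGraph V}

theorem connected_induce_insert {S : Set V} {u v : V} (hS : (G.induce S).Preconnected)
    (hv : v ∈ S) (huv : G.Adj u v) : (G.induce (insert u S)).Connected :=
  connected_induce_union (s := {u}) .of_subsingleton hS rfl hv huv

theorem exists_connected_induce_of_mem {W : Set V} {a : V} (ha : a ∈ W) :
    ∃ C ⊆ W, a ∈ C ∧ (G.induce C).Connected ∧ ∀ y ∈ C, ∀ z ∈ W, G.Adj y z → z ∈ C := by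
  classical
  let C : Set V := {x | ∃ p : G.Walk a x, ∀ y ∈ p.support, y ∈ W}
  have hC : a ∈ C := ⟨.nil, by simpa⟩
  refine ⟨C, fun x ⟨p, hp⟩ => hp x p.end_mem_support, hC, ?_, ?_⟩
  · refine G.induce_connected_of_patches a hC fun {x} ⟨p, hp⟩ =>
      ⟨{y | y ∈ p.support}, fun y hy => ⟨p.takeUntil y hy, fun z hz => ?_⟩,
        p.start_mem_support, p.end_mem_support, p.connected_induce_support _ _⟩
    exact hp z (p.support_takeUntil_subset_support hy hz)
  · rintro y ⟨p, hp⟩ z hz hyz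
    refine ⟨p.concat hyz, fun x hx => ?_⟩
    rw [Walk.support_concat, List.mem_append, List.mem_singleton] at hx
    exact hx.elim (hp x) fun h => h ▸ hz

theorem exists_connected_induce_diff_adj {C P : Set V} (hC : (G.induce C).Preconnected) {e f : V}
    (he : e ∈ C \ P) (hf : f ∈ C ∩ P) :
    ∃ D ⊆ C \ P, (G.induce D).Connected ∧ e ∈ D ∧ ∃ x ∈ D, ∃ y ∈ C ∩ P, G.Adj x y := by
  obtain ⟨D, hDC, heD, hD, hclosed⟩ := exists_connected_induce_of_mem (G := G) he
  obtain ⟨p⟩ := hC ⟨e, he.1⟩ ⟨f, hf.1⟩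
  obtain ⟨d, -, hx, hy⟩ :=
    p.exists_boundary_dart (Subtype.val ⁻¹' D) heD fun hfD => (hDC hfD).2 hf.2
  refine ⟨D, hDC, hD, heD, d.fst, hx, d.snd, ⟨d.snd.2, ?_⟩, d.adj⟩
  by_contra hP
  exact hy (hclosed _ hx _ ⟨d.snd.2, hP⟩ d.adj)

end Connectivity

section InducedCycles

variable {α : Type} {G : SimpleGraph α} {V₁ V₂ : Set α}

theorem hasInducedCycleOn_of_pathGraph_embedding {m : ℕ} (q : pathGraph (m + 1) ↪g G) {b : α}
    (hbq : b ∉ Set.range q) (hb : ∀ i, G.Adj b (q i) ↔ i = 0 ∨ i = Fin.last m) :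
    HasInducedCycleOn G (m + 2) := by
  have hsucc (i j : Fin (m + 2)) :
      j = i + 1 ↔ j.val = i.val + 1 ∨ (i.val = m + 1 ∧ j.val = 0) := by
    rw [Fin.ext_iff, Fin.val_add_one]
    simp only [Fin.ext_iff, Fin.val_last]
    split_ifs <;> omega
  let cyc : Fin (m + 2) → α := Fin.cons b q
  -- `ZMod (m + 2)` unfolds to `Fin (m + 2)`.
  suffices h : ∀ i j : Fin (m + 2), G.Adj (cyc i) (cyc j) ↔ j = i + 1 ∨ i = j + 1 from
    ⟨cyc, Fin.cons_injective_iff.2 ⟨hbq, q.injective⟩, h⟩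
  intro i j
  rw [hsucc, hsucc]
  cases i using Fin.cases <;> cases j using Fin.cases
  · simp
  · simp only [cyc, Fin.cons_zero, Fin.cons_succ, hb, Fin.ext_iff, Fin.val_zero, Fin.val_succ,
      Fin.val_last, and_true]
    omega
  · rw [G.adj_comm]
    simp only [cyc, Fin.cons_zero, Fin.cons_succ, hb, Fin.ext_iff, Fin.val_zero, Fin.val_succ,
      Fin.val_last, and_true]
    omega
  · simp only [cyc, Fin.cons_succ, q.map_adj_iff, pathGraph_adj, Fin.val_succ]
    omega

theorem hasInducedCycleOn_dist_add_two {W : Set α} {b : α} (hbW : b ∉ W) {s t : W}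
    (hadj : ∀ x : W, G.Adj b x ↔ x = s ∨ x = t) (hr : (G.induce W).Reachable s t) :
    HasInducedCycleOn G ((G.induce W).dist s t + 2) := by
  obtain ⟨q, hqs, hqt⟩ := exists_pathGraph_embedding hr
  refine hasInducedCycleOn_of_pathGraph_embedding (b := b)
    (q.trans (Embedding.induce W)) ?_ fun i => ?_
  · rintro ⟨i, rfl⟩
    exact hbW (q i).2
  · have heq (j) : q i = q j ↔ i = j := q.injective.eq_iff
    exact (hadj (q i)).trans (by rw [← heq 0, ← heq (Fin.last _), hqs, hqt])

/-- A shortest path from `s` to `t` through `f` and `D` has length at least four, and `b` closes it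
to an induced cycle. -/
theorem exists_six_le_hasInducedCycleOn (hb : G.IsBipartiteWith V₁ V₂) {D : Set α}
    (hD : (G.induce D).Preconnected) {b s t x y f : α} (hbV : b ∈ V₂) (hbD : b ∉ D)
    (hbND : Disjoint D (G.neighborSet b)) (hsND : Disjoint D (G.neighborSet s))
    (hbs : G.Adj b s) (hbt : G.Adj b t) (hsf : G.Adj s f) (hft : ¬ G.Adj f t)
    (hbf : b ≠ f) (hx : x ∈ D) (hfx : G.Adj f x) (hy : y ∈ D) (hty : G.Adj t y) :
    ∃ n, 6 ≤ n ∧ HasInducedCycleOn G n := by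
  have hs : s ∈ V₁ := hb.symm.mem_of_mem_adj hbV hbs
  have ht : t ∈ V₁ := hb.symm.mem_of_mem_adj hbV hbt
  have hf : f ∈ V₂ := hb.mem_of_mem_adj hs hsf
  let W : Set α := insert s (insert t (insert f D))
  have hW : (G.induce W).Preconnected :=
    (connected_induce_insert (connected_induce_insert
      (connected_induce_insert hD hx hfx).preconnected (.inr hy) hty).preconnected
      (.inr (.inl rfl)) hsf).preconnected
  have hbW : b ∉ W := by
    rintro (rfl | rfl | rfl | h)
    exacts [hbs.ne rfl, hbt.ne rfl, hbf rfl, hbD h]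
  have hbadj (z : W) : G.Adj b z ↔ z = ⟨s, .inl rfl⟩ ∨ z = ⟨t, .inr (.inl rfl)⟩ := by
    rw [Subtype.ext_iff, Subtype.ext_iff]
    refine ⟨fun hbz => ?_, ?_⟩
    · rcases z.2 with h | h | h | h
      · exact .inl h
      · exact .inr h
      · exact (Set.disjoint_left.1 hb.disjoint (hb.symm.mem_of_mem_adj hbV (h ▸ hbz)) hf).elim
      · exact (Set.disjoint_left.1 hbND h hbz).elim
    · rintro (h | h) <;> rwa [h]
  refine ⟨_, Nat.add_le_add_right ?_ 2, hasInducedCycleOn_dist_add_two hbW hbadj (hW _ _)⟩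
  have hbW' : (G.induce W).IsBipartiteWith (Subtype.val ⁻¹' V₁) (Subtype.val ⁻¹' V₂) :=
    ⟨hb.disjoint.preimage _, fun _ _ h => hb.mem_of_adj h⟩
  refine four_le_dist_of_isBipartiteWith hbW' hs ht (fun h => hft ?_) (fun z hsz hzt => ?_) (hW _ _)
  · rw [← show s = t from congrArg Subtype.val h]
    exact hsf.symm
  · have hsz : G.Adj s z := hsz
    rcases z.2 with h | h | h | h
    · exact hsz.ne h.symm
    · exact Set.disjoint_left.1 hb.disjoint ht (hb.mem_of_mem_adj hs (h ▸ hsz))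
    · exact hft (h ▸ hzt)
    · exact Set.disjoint_left.1 hsND h hsz

theorem neighborSet_inter_subset_of_maximalFor (hb : G.IsBipartiteWith V₁ V₂)
    (hG : ∀ n, 6 ≤ n → ¬ HasInducedCycleOn G n) {C : Set α} (hC : (G.induce C).Preconnected)
    {b e f : α} (hbV : b ∈ V₂) (hbC : b ∉ C) (hbNC : Disjoint C (G.neighborSet b))
    (he : MaximalFor (· ∈ C ∩ V₂) (fun g => G.neighborSet g ∩ G.neighborSet b) e)
    (hf : f ∈ C ∩ V₂) : G.neighborSet f ∩ G.neighborSet b ⊆ G.neighborSet e := by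
  rintro s ⟨(hfs : G.Adj f s), hbs⟩
  by_contra hes
  have hs : s ∈ V₁ := hb.symm.mem_of_mem_adj hbV hbs
  obtain ⟨D, hDC, hD, heD, x, hx, g, ⟨hgC, (hsg : G.Adj s g)⟩, hxg⟩ :=
    exists_connected_induce_diff_adj (P := G.neighborSet s) hC
      ⟨he.prop.1, fun (h : G.Adj s e) => hes h.symm⟩ ⟨hf.1, hfs.symm⟩
  obtain ⟨t, ⟨het, hbt⟩, hgt⟩ : ∃ t ∈ G.neighborSet e ∩ G.neighborSet b, ¬ G.Adj g t := by
    by_contra! hle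
    have hge := he.le_of_le ⟨hgC, hb.mem_of_mem_adj hs hsg⟩ fun t ht => ⟨hle t ht, ht.2⟩
    exact hes (hge ⟨hsg.symm, hbs⟩).1
  obtain ⟨n, hn, hcycle⟩ := exists_six_le_hasInducedCycleOn hb hD.preconnected hbV
    (fun h => hbC (hDC h).1) (hbNC.mono_left fun _ h => (hDC h).1)
    (Set.disjoint_left.2 fun _ h => (hDC h).2) hbs hbt hsg hgt (fun h => hbC (h ▸ hgC))
    hx hxg.symm heD het.symm
  exact hG n hn hcycle

end InducedCycles

section NestPoints

variable {V : Type*} {G : SimpleGraph V} {A T : Set V} {v : V}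

/-- A nest point of the hypergraph with vertex set `A` whose edges are the traces on `A` of the
neighbourhoods of the vertices of `T`: the edges through `v` form a chain. -/
def IsNestPoint (G : SimpleGraph V) (A T : Set V) (v : V) : Prop :=
  IsChain (fun u w => G.neighborSet u ∩ A ⊆ G.neighborSet w) (G.neighborSet v ∩ T)

theorem isNestPoint_of_disjoint (h : Disjoint (G.neighborSet v) T) : IsNestPoint G A T v := by
  rw [IsNestPoint, h.inter_eq]
  exact .empty

theorem IsNestPoint.of_subset {A' T' : Set V} (h : IsNestPoint G A' T' v)
    (hT : G.neighborSet v ∩ T ⊆ T') (hA : ∀ u ∈ T', G.neighborSet u ∩ A ⊆ A') :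
    IsNestPoint G A T v := by
  have hsub : G.neighborSet v ∩ T ⊆ G.neighborSet v ∩ T' := fun u hu => ⟨hu.1, hT hu⟩
  intro u hu w hw huw
  exact (h (hsub hu) (hsub hw) huw).imp (fun huw x hx => huw ⟨hx.1, hA u (hT hu) hx⟩)
    fun hwu x hx => hwu ⟨hx.1, hA w (hT hw) hx⟩

theorem IsNestPoint.insert_of_subset {e : V} (h : IsNestPoint G A T v)
    (he : A ⊆ G.neighborSet e) : IsNestPoint G A (insert e T) v := by
  refine IsChain.mono (t := insert e (G.neighborSet v ∩ T)) ?_ <|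
    IsChain.insert h fun w _ _ => .inr (Set.inter_subset_right.trans he)
  rintro u ⟨hvu, rfl | hu⟩
  exacts [.inl rfl, .inr ⟨hvu, hu⟩]

end NestPoints

section ChordalBipartite

variable {α : Type} {G : SimpleGraph α} {V₁ V₂ : Set α}

theorem IsNestPoint.weaklySimplicialVtx {v : α} (h : IsNestPoint G V₁ V₂ v)
    (hb : G.IsBipartiteWith V₁ V₂) (hv : v ∈ V₁) : WeaklySimplicialVtx G v := by
  refine ⟨fun u w hvu hvw huw => ?_, fun u w hvu hvw => ?_⟩
  · have hw : w ∈ V₁ := hb.symm.mem_of_mem_adj (hb.mem_of_mem_adj hv hvu) huw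
    exact Set.disjoint_left.1 hb.disjoint hw (hb.mem_of_mem_adj hv hvw)
  · have hu := hb.mem_of_mem_adj hv hvu
    have hw := hb.mem_of_mem_adj hv hvw
    rcases eq_or_ne u w with rfl | huw
    · exact .inl subset_rfl
    · exact (h ⟨hvu, hu⟩ ⟨hvw, hw⟩ huw).imp
        (fun h x hx => h ⟨hx, hb.symm.mem_of_mem_adj hu hx⟩)
        (fun h x hx => h ⟨hx, hb.symm.mem_of_mem_adj hw hx⟩)

/-- In the proof, `C` is the component of `a` outside the closed neighbourhood of `b`, `U` is
`C ∩ T`, `A'` consists of the vertices of `A` with a neighbour in `U`, and `e ∈ U` has a maximal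
trace on the neighbourhood of `b`. -/
theorem exists_isNestPoint_reduction (hb : G.IsBipartiteWith V₁ V₂)
    (hG : ∀ n, 6 ≤ n → ¬ HasInducedCycleOn G n) {A T : Set α} (hA : A ⊆ V₁) (hT : T ⊆ V₂)
    (hTfin : T.Finite) {a b : α} (ha : a ∈ A) (hbT : b ∈ T) (hba : ¬ G.Adj b a)
    (haT : (G.neighborSet a ∩ T).Nonempty) :
    ∃ A' ⊆ A, ∃ U ⊆ T \ {b}, ∃ e ∈ U, a ∈ A' ∧
      (∀ v ∈ A', ¬ G.Adj e v → ¬ G.Adj b v) ∧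
      ∀ v ∈ A', ¬ G.Adj b v → IsNestPoint G A' U v → IsNestPoint G A T v := by
  have hdisj : ∀ x ∈ V₁, x ∉ V₂ := fun _ h => Set.disjoint_left.1 hb.disjoint h
  have hmem (z : α) (hz : z ∈ A ∪ T) (hzb : z ≠ b) (hbz : ¬ G.Adj b z) :
      z ∈ (A ∪ T) \ insert b (G.neighborSet b) := ⟨hz, not_or.2 ⟨hzb, hbz⟩⟩
  have hbA (v : α) (hv : v ∈ A) : v ≠ b := fun h => hdisj v (hA hv) (h ▸ hT hbT)
  have hbV₂ (u : α) (hu : u ∈ T) : ¬ G.Adj b u := fun h =>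
    hdisj u (hb.symm.mem_of_mem_adj (hT hbT) h) (hT hu)
  obtain ⟨C, hCW, haC, hC, hclosed⟩ :=
    exists_connected_induce_of_mem (G := G) (hmem a (.inl ha) (hbA a ha) hba)
  have hstep (v : α) (hv : v ∈ C) (hbv : ¬ G.Adj b v) (u : α) (hu : u ∈ T) (hvu : G.Adj v u) :
      u ∈ C :=
    hclosed v hv u (hmem u (.inr hu) (fun h => hbv (h ▸ hvu.symm)) (hbV₂ u hu)) hvu
  have hbC : b ∉ C := fun h => (hCW h).2 (.inl rfl)
  have hCT : C ∩ V₂ = C ∩ T := by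
    refine Set.Subset.antisymm (fun x hx => ⟨hx.1, ?_⟩) (Set.inter_subset_inter_right C hT)
    exact (hCW hx.1).1.resolve_left fun h => hdisj x (hA h) hx.2
  obtain ⟨f, haf, hfT⟩ := haT
  have hfC : f ∈ C := hstep a haC hba f hfT haf
  obtain ⟨e, he⟩ := Set.Finite.exists_maximalFor
    (fun g => G.neighborSet g ∩ G.neighborSet b) (C ∩ T) (hTfin.inter_of_right C) ⟨f, hfC, hfT⟩
  refine ⟨{x ∈ A | ∃ g ∈ C ∩ T, G.Adj g x}, Set.sep_subset _ _, C ∩ T,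
    fun u hu => ⟨hu.2, fun h => hbC (h ▸ hu.1)⟩, e, he.prop, ⟨ha, f, ⟨hfC, hfT⟩, G.adj_symm haf⟩,
    ?_, ?_⟩
  · rintro v ⟨-, g, hg, hgv⟩ hev hbv
    rw [← hCT] at he hg
    exact hev (neighborSet_inter_subset_of_maximalFor hb hG hC.preconnected (hT hbT) hbC
      (Set.disjoint_left.2 fun x hx h => (hCW hx).2 (.inr h)) he hg ⟨hgv, hbv⟩)
  · rintro v ⟨hvA, g, hg, hgv⟩ hbv hv
    have hvC : v ∈ C := hclosed g hg.1 v (hmem v (.inl hvA) (hbA v hvA) hbv) hgv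
    exact hv.of_subset (fun u hu => ⟨hstep v hvC hbv u hu.2 hu.1, hu.2⟩)
      fun u hu x hx => ⟨hx.2, u, hu, hx.1⟩

theorem exists_isNestPoint_not_adj (hb : G.IsBipartiteWith V₁ V₂)
    (hG : ∀ n, 6 ≤ n → ¬ HasInducedCycleOn G n) {A T : Set α} (hA : A ⊆ V₁) (hT : T ⊆ V₂)
    (hTfin : T.Finite) {a b : α} (ha : a ∈ A) (hbT : b ∈ T) (hba : ¬ G.Adj b a) :
    ∃ v ∈ A, ¬ G.Adj b v ∧ IsNestPoint G A T v := by
  induction hn : T.ncard using Nat.strong_induction_on generalizing A T a b with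
  | h n ih =>
  subst hn
  by_cases haT : (G.neighborSet a ∩ T).Nonempty
  swap
  · exact ⟨a, ha, hba, isNestPoint_of_disjoint
      (Set.disjoint_iff_inter_eq_empty.2 (Set.not_nonempty_iff_eq_empty.1 haT))⟩
  obtain ⟨A', hA', U, hU, e, heU, haA', heb, hlift⟩ :=
    exists_isNestPoint_reduction hb hG hA hT hTfin ha hbT hba haT
  have hUT : U ⊆ T := hU.trans Set.sdiff_subset
  by_cases hcover : A' ⊆ G.neighborSet e
  · have hssub : insert b (U \ {e}) ⊂ T :=
      (Set.ssubset_iff_of_subset (Set.insert_subset hbT (Set.sdiff_subset.trans hUT))).2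
        ⟨e, hUT heU, fun h => h.elim (hU heU).2 fun h => h.2 rfl⟩
    obtain ⟨v, hv, hbv, hnest⟩ := ih _ (Set.ncard_lt_ncard hssub hTfin) (hA'.trans hA)
      (hssub.subset.trans hT) (hTfin.subset hssub.subset) haA' (Set.mem_insert _ _) hba rfl
    refine ⟨v, hA' hv, hbv, hlift v hv hbv ((hnest.insert_of_subset hcover).of_subset ?_
      fun u _ => Set.inter_subset_right)⟩
    exact fun u hu => (em (u = e)).imp id fun hue => .inr ⟨hu.2, hue⟩
  · obtain ⟨x, hx, hex⟩ := Set.not_subset.1 hcover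
    have hssub : U ⊂ T := (Set.ssubset_iff_of_subset hUT).2 ⟨b, hbT, fun h => (hU h).2 rfl⟩
    obtain ⟨v, hv, hev, hnest⟩ := ih _ (Set.ncard_lt_ncard hssub hTfin) (hA'.trans hA)
      (hUT.trans hT) (hTfin.subset hUT) hx heU hex rfl
    exact ⟨v, hA' hv, heb v hv hev, hlift v hv (heb v hv hev) hnest⟩

theorem exists_mem_weaklySimplicialVtx (hb : G.IsBipartiteWith V₁ V₂)
    (hG : ∀ n, 6 ≤ n → ¬ HasInducedCycleOn G n) (hV₂ : V₂.Finite) (hne : V₁.Nonempty) :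
    ∃ v ∈ V₁, WeaklySimplicialVtx G v := by
  by_cases hcomplete : ∀ a ∈ V₁, ∀ b ∈ V₂, G.Adj b a
  · obtain ⟨a, ha⟩ := hne
    have hnest : IsNestPoint G V₁ V₂ a := fun _ _ w hw _ =>
      .inl fun x hx => hcomplete x hx.2 w hw.2
    exact ⟨a, ha, hnest.weaklySimplicialVtx hb ha⟩
  · push Not at hcomplete
    obtain ⟨a, ha, b, hbV, hba⟩ := hcomplete
    obtain ⟨v, hv, -, hnest⟩ :=
      exists_isNestPoint_not_adj hb hG subset_rfl subset_rfl hV₂ ha hbV hba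
    exact ⟨v, hv, hnest.weaklySimplicialVtx hb hv⟩

theorem ChordalBipartite.exists_weaklySimplicialVtx [Finite α] [Nonempty α]
    (hG : ChordalBipartite G) : ∃ v, WeaklySimplicialVtx G v := by
  obtain ⟨V₁, V₂, hb⟩ := isBipartite_iff_exists_isBipartiteWith.1 hG.1
  obtain ⟨x⟩ := ‹Nonempty α›
  by_cases hx : ∃ y, G.Adj x y
  · obtain ⟨y, hxy⟩ := hx
    have hV₁ : V₁.Nonempty := (hb.mem_of_adj hxy).elim (fun h => ⟨x, h.1⟩) fun h => ⟨y, h.2⟩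
    obtain ⟨v, -, hv⟩ := exists_mem_weaklySimplicialVtx hb hG.2 V₂.toFinite hV₁
    exact ⟨v, hv⟩
  · exact ⟨x, fun u _ hu => (hx ⟨u, hu⟩).elim, fun u _ hu => (hx ⟨u, hu⟩).elim⟩

theorem HasInducedCycleOn.of_induce {S : Set α} {n : ℕ} (h : HasInducedCycleOn (G.induce S) n) :
    HasInducedCycleOn G n := by
  obtain ⟨f, hf, hadj⟩ := h
  exact ⟨Subtype.val ∘ f, Subtype.val_injective.comp hf, hadj⟩

theorem ChordalBipartite.induce (hG : ChordalBipartite G) (S : Set α) :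
    ChordalBipartite (G.induce S) :=
  ⟨hG.1.of_hom (Embedding.induce S).toHom, fun n hn h => hG.2 n hn h.of_induce⟩

/-- As `ZMod 0` is `ℤ`, the case `n = 0` is that of an induced two-way infinite path. -/
theorem HasInducedCycleOn.exists_forall_not_weaklySimplicialVtx {n : ℕ}
    (h : HasInducedCycleOn G n) (hn : ¬ n ∣ 4) :
    ∃ S : Set α, S.Nonempty ∧ ∀ v : S, ¬ WeaklySimplicialVtx (G.induce S) v := by
  obtain ⟨f, -, hadj⟩ := h
  have h4 : (4 : ZMod n) ≠ 0 := fun h0 => hn ((ZMod.natCast_eq_zero_iff 4 n).1 (mod_cast h0))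
  have h2 : (2 : ZMod n) ≠ 0 := fun h0 => h4 (by linear_combination 2 * h0)
  refine ⟨Set.range f, ⟨f 0, 0, rfl⟩, ?_⟩
  rintro ⟨_, i, rfl⟩ ⟨-, hchain⟩
  rcases hchain ⟨f (i + 1), i + 1, rfl⟩ ⟨f (i - 1), i - 1, rfl⟩
    ((hadj _ _).2 (.inl rfl)) ((hadj _ _).2 (.inr (by ring))) with hle | hle
  · have hchord : G.Adj (f (i - 1)) (f (i + 2)) :=
      @hle ⟨f (i + 2), i + 2, rfl⟩ ((hadj _ _).2 (.inl (by ring)))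
    rcases (hadj _ _).1 hchord with h | h
    · exact h2 (by linear_combination h)
    · exact h4 (by linear_combination -h)
  · have hchord : G.Adj (f (i + 1)) (f (i - 2)) :=
      @hle ⟨f (i - 2), i - 2, rfl⟩ ((hadj _ _).2 (.inr (by ring)))
    rcases (hadj _ _).1 hchord with h | h
    · exact h4 (by linear_combination -h)
    · exact h2 (by linear_combination h)

theorem WeaklySimplicialVtx.exists_adj_adj {v : α} (hv : WeaklySimplicialVtx G v) {w₁ w₂ x₁ x₂ : α}
    (hw₁ : G.Adj v w₁) (hx₁ : G.Adj w₁ x₁) (hw₂ : G.Adj v w₂) (hx₂ : G.Adj w₂ x₂) :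
    ∃ w, G.Adj v w ∧ G.Adj w x₁ ∧ G.Adj w x₂ :=
  (hv.2 w₁ w₂ hw₁ hw₂).elim (fun h => ⟨w₂, hw₂, h hx₁, hx₂⟩) fun h => ⟨w₁, hw₁, hx₁, h hx₂⟩

theorem WeaklySimplicialVtx.exists_coloring_eq {v : α} (hv : WeaklySimplicialVtx G v)
    (c : (G.induce {v}ᶜ).Coloring Bool) :
    ∃ k, ∀ w x (hx : x ≠ v), G.Adj v w → G.Adj w x → c ⟨x, hx⟩ = k := by
  by_cases hex : ∃ w₀ x₀, x₀ ≠ v ∧ G.Adj v w₀ ∧ G.Adj w₀ x₀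
  · obtain ⟨w₀, x₀, hx₀, hvw₀, hwx₀⟩ := hex
    refine ⟨c ⟨x₀, hx₀⟩, fun w₁ x hx hvw₁ hwx₁ => ?_⟩
    obtain ⟨w, hvw, hwx, hwx₀⟩ := hv.exists_adj_adj hvw₁ hwx₁ hvw₀ hwx₀
    have hne {z : α} (hz : z ≠ v) (hwz : G.Adj w z) : c ⟨z, hz⟩ = !c ⟨w, hvw.ne'⟩ :=
      Bool.eq_not_of_ne (c.valid (v := ⟨z, hz⟩) (w := ⟨w, hvw.ne'⟩) hwz.symm)
    rw [hne hx hwx, hne hx₀ hwx₀]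
  · exact ⟨true, fun w x hx hvw hwx => (hex ⟨w, x, hx, hvw, hwx⟩).elim⟩

theorem WeaklySimplicialVtx.colorable_two {v : α} (hv : WeaklySimplicialVtx G v)
    (h : (G.induce {v}ᶜ).Colorable 2) : G.Colorable 2 := by
  classical
  let c : (G.induce {v}ᶜ).Coloring Bool := h.toColoring (by simp)
  obtain ⟨k, hk⟩ := hv.exists_coloring_eq c
  let d : α → Bool := fun x => if hx : x = v then k else if G.Adj v x then !k else c ⟨x, hx⟩
  have hd₀ : d v = k := dif_pos rfl
  have hd₁ (x) (hx : G.Adj v x) : d x = !k := by simp only [d, hx, hx.ne', dite_false, if_true]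
  have hd₂ (x) (hxv : x ≠ v) (hx : ¬ G.Adj v x) : d x = c ⟨x, hxv⟩ := by
    simp only [d, hx, hxv, dite_false, if_false]
  have hvalid₁ {x y : α} (hx : G.Adj v x) (hxy : G.Adj x y) : d x ≠ d y := by
    have hy : d y = k := by
      by_cases hyv : y = v
      · rw [hyv, hd₀]
      · rw [hd₂ y hyv fun hy => hv.1 x y hx hy hxy, hk x y hyv hx hxy]
    rw [hd₁ x hx, hy]
    exact Bool.not_ne_self k
  have hvalid {x y : α} (hxy : G.Adj x y) : d x ≠ d y := by
    by_cases hx : G.Adj v x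
    · exact hvalid₁ hx hxy
    by_cases hy : G.Adj v y
    · exact (hvalid₁ hy hxy.symm).symm
    have hxv : x ≠ v := fun h => hy (h ▸ hxy)
    have hyv : y ≠ v := fun h => hx (h ▸ hxy.symm)
    rw [hd₂ x hxv hx, hd₂ y hyv hy]
    exact c.valid (v := ⟨x, hxv⟩) (w := ⟨y, hyv⟩) hxy
  simpa using (Coloring.mk d hvalid).colorable

theorem colorable_two_of_forall_exists_weaklySimplicialVtx [Finite α]
    (h : ∀ S : Set α, S.Nonempty → ∃ v : S, WeaklySimplicialVtx (G.induce S) v) :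
    G.Colorable 2 := by
  suffices hS : ∀ S : Set α, (G.induce S).Colorable 2 from
    (hS Set.univ).of_hom (induceUnivIso G).symm.toHom
  intro S
  induction S using WellFoundedLT.induction with
  | ind S ih =>
  rcases S.eq_empty_or_nonempty with rfl | hS
  · exact .of_isEmpty _
  · obtain ⟨v, hv⟩ := h S hS
    refine hv.colorable_two ((ih (S \ {v.1}) ?_).of_hom
      ⟨fun x => ⟨x.1.1, x.1.2, fun h => x.2 (Subtype.ext h)⟩, id⟩)
    exact Set.sdiff_singleton_ssubset.2 v.2

end ChordalBipartite

/-- a (finite) graph is chordal bipartite iff every nonempty induced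
subgraph has a weakly simplicial vertex; moreover every nontrivial chordal bipartite
graph has a weakly simplicial vertex in each partition class. -/
theorem chordalBipartite_iff_weaklySimplicial {α : Type} [Fintype α]
    (G : SimpleGraph α) :
    (ChordalBipartite G ↔
        ∀ S : Set α, S.Nonempty → ∃ v : S, WeaklySimplicialVtx (G.induce S) v) ∧
      (ChordalBipartite G → G.edgeSet.Nonempty →
        ∀ V₁ V₂ : Set α, IsBipartitionOf G V₁ V₂ →
          (∃ v ∈ V₁, WeaklySimplicialVtx G v) ∧ ∃ v ∈ V₂, WeaklySimplicialVtx G v) := by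
  refine ⟨⟨fun hG S hS => ?_, fun h => ⟨?_, fun n hn hcycle => ?_⟩⟩, fun hG hE V₁ V₂ hV => ?_⟩
  · have := hS.to_subtype
    exact (hG.induce S).exists_weaklySimplicialVtx
  · exact colorable_two_of_forall_exists_weaklySimplicialVtx h
  · obtain ⟨S, hS, hno⟩ := hcycle.exists_forall_not_weaklySimplicialVtx
      fun hdvd => absurd (Nat.le_of_dvd (by norm_num) hdvd) (by omega)
    obtain ⟨v, hv⟩ := h S hS
    exact hno v hv
  · have hb : G.IsBipartiteWith V₁ V₂ := ⟨hV.2.1, hV.2.2⟩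
    obtain ⟨⟨x, y⟩, hxy⟩ := hE
    obtain ⟨hV₁, hV₂⟩ : V₁.Nonempty ∧ V₂.Nonempty := by
      rcases hb.mem_of_adj hxy with ⟨hx, hy⟩ | ⟨hx, hy⟩
      exacts [⟨⟨x, hx⟩, ⟨y, hy⟩⟩, ⟨⟨y, hy⟩, ⟨x, hx⟩⟩]
    exact ⟨exists_mem_weaklySimplicialVtx hb hG.2 V₂.toFinite hV₁,
      exists_mem_weaklySimplicialVtx hb.symm hG.2 V₁.toFinite hV₂⟩
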